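/- arXiv:2002.01298 — 7 statements merged into one kernel-verified Lean document; each statement's English description precedes it below -/
import Mathlib

section
/- For every positive integer r, every real a > 0, and every signature s = (s_1,…,s_r), one has Σ_{j=1}^r c'_s(j) = r, where c'_s(j) = ∏_{k≠j, 1≤k≤r} (s_j − s_k + (a/2)(k−j−1))/(s_j − s_k + (a/2)(k−j)). (First half of Lemma 3.3.) -/
/-!
The polynomial `∏ (X - y_k) - ∏ (X - x_k)` has degree less than the number `n` of nodes, so its
coefficient of `X ^ (n - 1)`, namely `∑ (x_k - y_k)`, is given by Lagrange interpolation at the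
nodes `x_i`, where its value is `∏_k (x_i - y_k)`. For `y_k = x_k + h` the factor `k = i` of this
product is `-h`; cancelling it leaves `∑_i ∏_{k ≠ i} (x_i - x_k - h) / (x_i - x_k) = n`
(when `h = 0`, every summand is `1`).
The coefficients `c'_s(j)` are the summands for the nodes `x_j = s_j - (a/2) j` and `h = a/2`.
-/

open Finset

/-- The coefficient `c'_s(j)` from Lemma 3.3 of the paper:
`c'_s(j) = ∏_{k≠j} (s_j − s_k + (a/2)(k−j−1))/(s_j − s_k + (a/2)(k−j))`
(indices are zero-based, which does not change the differences `k − j`). -/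
noncomputable def cPrime {r : ℕ} (a : ℝ) (s : Fin r → ℕ) (j : Fin r) : ℝ :=
  ∏ k ∈ Finset.univ.erase j,
    (((s j : ℝ) - (s k : ℝ) + (a / 2) * (((k : ℕ) : ℝ) - ((j : ℕ) : ℝ) - 1)) /
      ((s j : ℝ) - (s k : ℝ) + (a / 2) * (((k : ℕ) : ℝ) - ((j : ℕ) : ℝ))))

section NodalDifference

open Polynomial Lagrange

variable {ι R : Type*} [CommRing R]

theorem degree_nodal_sub_nodal_lt (s : Finset ι) (x y : ι → R) :
    (nodal s y - nodal s x).degree < #s := by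
  nontriviality R
  rw [← degree_nodal (s := s) (v := y)]
  exact degree_sub_lt_left (degree_nodal.trans degree_nodal.symm) nodal_ne_zero
    (nodal_monic.leadingCoeff.trans nodal_monic.leadingCoeff.symm)

theorem coeff_card_sub_one_nodal_sub_nodal (s : Finset ι) (x y : ι → R) :
    (nodal s y - nodal s x).coeff (#s - 1) = ∑ i ∈ s, (x i - y i) := by
  obtain rfl | hs := s.eq_empty_or_nonempty
  · simp
  · rw [coeff_sub, nodal_eq, nodal_eq, prod_X_sub_C_coeff_card_pred s y hs.card_pos,
      prod_X_sub_C_coeff_card_pred s x hs.card_pos, neg_sub_neg, sum_sub_distrib]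

end NodalDifference

section RationalIdentity

variable {ι F : Type*} [DecidableEq ι] [Field F] {s : Finset ι} {x : ι → F}

theorem sum_prod_sub_div_prod_erase_sub (hx : Set.InjOn x s) (y : ι → F) :
    ∑ i ∈ s, (∏ k ∈ s, (x i - y k)) / ∏ k ∈ s.erase i, (x i - x k) = ∑ i ∈ s, (x i - y i) := by
  rw [← coeff_card_sub_one_nodal_sub_nodal,
    Lagrange.coeff_eq_sum hx (degree_nodal_sub_nodal_lt s x y)]
  refine sum_congr rfl fun i hi => ?_
  rw [Polynomial.eval_sub, Lagrange.eval_nodal, Lagrange.eval_nodal_at_node hi, sub_zero]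

theorem prod_erase_sub_div_sub_eq_one (hx : Set.InjOn x s) {i : ι} (hi : i ∈ s) :
    ∏ k ∈ s.erase i, (x i - x k) / (x i - x k) = 1 :=
  prod_eq_one fun _ hk =>
    div_self <| sub_ne_zero.2 fun h => ne_of_mem_erase hk (hx hi (mem_of_mem_erase hk) h).symm

theorem sum_prod_erase_sub_sub_div_sub (hx : Set.InjOn x s) (h : F) :
    ∑ i ∈ s, ∏ k ∈ s.erase i, (x i - x k - h) / (x i - x k) = #s := by
  obtain rfl | hh := eq_or_ne h 0
  · simp only [sub_zero]
    rw [sum_congr rfl fun i hi => prod_erase_sub_div_sub_eq_one hx hi, sum_const, nsmul_one]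
  · have split_diagonal : ∀ i ∈ s, ∏ k ∈ s, (x i - (x k + h)) =
        -h * ∏ k ∈ s.erase i, (x i - x k - h) := fun i hi => by
      simp only [← mul_prod_erase s _ hi, sub_add_eq_sub_sub, sub_self, zero_sub]
    refine mul_left_cancel₀ (neg_ne_zero.2 hh) ?_
    calc -h * ∑ i ∈ s, ∏ k ∈ s.erase i, (x i - x k - h) / (x i - x k)
      _ = ∑ i ∈ s, (∏ k ∈ s, (x i - (x k + h))) / ∏ k ∈ s.erase i, (x i - x k) := by
        rw [mul_sum]
        refine sum_congr rfl fun i hi => ?_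
        rw [split_diagonal i hi, prod_div_distrib, mul_div_assoc]
      _ = ∑ i ∈ s, (x i - (x i + h)) := sum_prod_sub_div_prod_erase_sub hx _
      _ = -h * #s := by simp [mul_comm]

end RationalIdentity

theorem strictAnti_natCast_sub_mul {R : Type*} [Ring R] [PartialOrder R] [IsStrictOrderedRing R]
    {r : ℕ} {c : R} (hc : 0 < c) {s : Fin r → ℕ} (hs : Antitone s) :
    StrictAnti fun j => (s j : R) - c * (j : ℕ) := by
  have natCast_antitone : Antitone fun j => (s j : R) := Nat.mono_cast.comp_antitone hs
  have index_strictMono : StrictMono fun j : Fin r => c * (j : ℕ) :=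
    (Nat.strictMono_cast.comp Fin.val_strictMono).const_mul hc
  simpa only [sub_eq_add_neg] using natCast_antitone.add_strictAnti index_strictMono.neg

theorem cPrime_eq_prod_sub_sub_div_sub {r : ℕ} (a : ℝ) (s : Fin r → ℕ) (j : Fin r) :
    cPrime a s j = ∏ k ∈ univ.erase j,
      ((s j - a / 2 * (j : ℕ)) - (s k - a / 2 * (k : ℕ)) - a / 2) /
        ((s j - a / 2 * (j : ℕ)) - (s k - a / 2 * (k : ℕ))) := by
  refine prod_congr rfl fun k _ => ?_
  congr 1 <;> ring

theorem sum_cPrime_eq_rank_general (r : ℕ) (a : ℝ) (s : Fin r → ℕ)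
    (hs : Function.Injective fun j => (s j : ℝ) - a / 2 * (j : ℕ)) :
    ∑ j : Fin r, cPrime a s j = r := by
  simp only [cPrime_eq_prod_sub_sub_div_sub]
  rw [sum_prod_erase_sub_sub_div_sub hs.injOn, card_univ, Fintype.card_fin]

/-- First half of Lemma 3.3: for every signature `s` (an antitone `r`-tuple of
nonnegative integers), `Σ_{j=1}^r c'_s(j) = r`. -/
theorem sum_cPrime_eq_rank (r : ℕ) (hr : 0 < r) (a : ℝ) (ha : 0 < a)
    (s : Fin r → ℕ) (hs : Antitone s) :
    ∑ j : Fin r, cPrime a s j = r :=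
  sum_cPrime_eq_rank_general r a s (strictAnti_natCast_sub_mul (half_pos ha) hs).injective
end

section
/- Let r be a positive integer, a > 0 a real number, and s a signature such that s − ε_j is again a signature for some j ∈ {1,…,r}. Then c'_s(j) > 0 and 1/c'_s(j) ≤ (1 + (a/2)(r−1))^r; equivalently c'_s(j) ≥ (1 + (a/2)(r−1))^{−r}. (Inequality (3.2) in the proof of Theorem 3.4.) -/
open Finset

/-!
Only the factors of `c'_s(j)` with `k > j` can drop below `1`: for `k < j` the denominator is
negative and the numerator is smaller still. For `k > j` one has `s_j - s_k ≥ 1`, and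
`x / (x + a/2)` increases with `x > 0`, so each such factor is smallest when `s_j - s_k = 1`. In
that extremal case the product telescopes, giving `1 / c'_s(j) ≤ 1 + (a/2)(r - j)` in the paper's
one-based indexing, with equality for `s = (1, 0, …, 0)` and `j = 1`. This bound is at most
`1 + (a/2)(r - 1)`, hence at most its `r`-th power.
-/

section GeneralLemmas

theorem prod_Ico_div_succ_of_ne_zero {K : Type*} [CommGroupWithZero K] {f : ℕ → K} {m n : ℕ}
    (hmn : m ≤ n) (hf : ∀ i ∈ Icc m n, f i ≠ 0) :
    ∏ i ∈ Ico m n, f i / f (i + 1) = f m / f n := by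
  induction n, hmn using Nat.le_induction with
  | base => rw [Ico_self, prod_empty, div_self (hf m (left_mem_Icc.2 le_rfl))]
  | succ n hmn ih =>
    rw [prod_Ico_succ_top hmn, ih fun i hi ↦ hf i (Icc_subset_Icc_right n.le_succ hi),
      div_mul_div_cancel₀ (hf n (mem_Icc.2 ⟨hmn, n.le_succ⟩))]

theorem prod_Ioi_div_succ_of_ne_zero {K : Type*} [CommGroupWithZero K] {n : ℕ} {f : ℕ → K}
    (j : Fin n) (hf : ∀ i ∈ Ioc (j : ℕ) n, f i ≠ 0) :
    ∏ k ∈ Ioi j, f k / f (k + 1) = f (j + 1) / f n := by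
  calc ∏ k ∈ Ioi j, f k / f (k + 1)
    _ = ∏ i ∈ (Ioi j).map Fin.valEmbedding, f i / f (i + 1) := by
      rw [prod_map]; rfl
    _ = ∏ i ∈ Ico ((j : ℕ) + 1) n, f i / f (i + 1) := by
      rw [Fin.map_valEmbedding_Ioi, Ico_add_one_left_eq_Ioo]
    _ = f (j + 1) / f n :=
      prod_Ico_div_succ_of_ne_zero j.isLt (by rwa [Icc_add_one_left_eq_Ioc])

theorem div_add_le_div_add_of_le {K : Type*} [Field K] [LinearOrder K] [IsStrictOrderedRing K]
    {x y b : K} (hx : 0 < x) (hxy : x ≤ y) (hb : 0 ≤ b) : x / (x + b) ≤ y / (y + b) := by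
  have hy : 0 < y := hx.trans_le hxy
  rw [div_le_div_iff₀ (by positivity) (by positivity)]
  linarith [mul_le_mul_of_nonneg_right hxy hb]

theorem prod_Ioi_one_add_mul_div {K : Type*} [Field K] [LinearOrder K] [IsStrictOrderedRing K]
    {n : ℕ} {b : K} (hb : 0 ≤ b) (j : Fin n) :
    ∏ k ∈ Ioi j, (1 + b * ((k : ℕ) - (j : ℕ) - 1)) / (1 + b * ((k : ℕ) - (j : ℕ))) =
      (1 + b * ((n : K) - 1 - (j : ℕ)))⁻¹ := by
  have hne (i : ℕ) (hi : i ∈ Ioc (j : ℕ) n) : 1 + b * ((i : K) - (j : ℕ) - 1) ≠ 0 := by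
    have ht : (0 : K) ≤ i - (j : ℕ) - 1 :=
      sub_nonneg.2 (le_sub_iff_add_le'.2 (mod_cast (mem_Ioc.1 hi).1))
    positivity
  convert prod_Ioi_div_succ_of_ne_zero j hne using 1
  · refine prod_congr rfl fun k _ ↦ ?_
    push_cast
    ring
  · push_cast
    ring

theorem one_add_mul_le_one_add_mul_pow {K : Type*} [Field K] [LinearOrder K] [IsStrictOrderedRing K]
    {n : ℕ} {b : K} (hb : 0 ≤ b) (j : Fin n) :
    1 + b * ((n : K) - 1 - (j : ℕ)) ≤ (1 + b * ((n : K) - 1)) ^ n := by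
  have hn : (0 : K) ≤ n - 1 := sub_nonneg.2 (mod_cast j.pos)
  calc 1 + b * ((n : K) - 1 - (j : ℕ))
    _ ≤ 1 + b * ((n : K) - 1) := by
      gcongr 1 + b * ?_
      exact sub_le_self _ (Nat.cast_nonneg _)
    _ ≤ (1 + b * ((n : K) - 1)) ^ n :=
      le_self_pow₀ (le_add_of_nonneg_right (by positivity)) j.pos.ne'

theorem lt_of_antitone_update_sub_one {α : Type*} [Preorder α] [DecidableEq α] {f : α → ℕ}
    {j k : α} (hj : 1 ≤ f j) (hf : Antitone (Function.update f j (f j - 1))) (hjk : j < k) :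
    f k < f j := by
  have hle := hf hjk.le
  rw [Function.update_self, Function.update_of_ne hjk.ne'] at hle
  exact (Nat.le_sub_one_iff_lt hj).1 hle

end GeneralLemmas

/-- The `k`-th factor of the product `c'_s(j)`, which runs over `k ≠ j`. -/
noncomputable def cPrimeFactor {r : ℕ} (a : ℝ) (s : Fin r → ℕ) (j k : Fin r) : ℝ :=
  ((s j : ℝ) - s k + a / 2 * ((k : ℕ) - (j : ℕ) - 1)) /
    ((s j : ℝ) - s k + a / 2 * ((k : ℕ) - (j : ℕ)))

section CPrime

variable {r : ℕ} {a : ℝ} {s : Fin r → ℕ} {j k : Fin r}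

theorem cPrime_eq_prod_cPrimeFactor (a : ℝ) (s : Fin r → ℕ) (j : Fin r) :
    cPrime a s j = ∏ k ∈ univ.erase j, cPrimeFactor a s j k :=
  rfl

theorem one_le_cPrimeFactor (ha : 0 < a) (hkj : k < j) (hs : s j ≤ s k) :
    1 ≤ cPrimeFactor a s j k := by
  have hd : (s j : ℝ) - s k ≤ 0 := sub_nonpos.2 (Nat.cast_le.2 hs)
  have ht : ((k : ℕ) : ℝ) - (j : ℕ) < 0 := sub_neg.2 (Nat.cast_lt.2 hkj)
  have hneg : (s j : ℝ) - s k + a / 2 * ((k : ℕ) - (j : ℕ)) < 0 :=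
    add_neg_of_nonpos_of_neg hd (mul_neg_of_pos_of_neg (half_pos ha) ht)
  rw [cPrimeFactor, one_le_div_of_neg hneg]
  linarith

theorem div_le_cPrimeFactor (ha : 0 ≤ a) (hjk : j < k) (hs : s k < s j) :
    (1 + a / 2 * ((k : ℕ) - (j : ℕ) - 1)) / (1 + a / 2 * ((k : ℕ) - (j : ℕ))) ≤
      cPrimeFactor a s j k := by
  have hd : (1 : ℝ) ≤ s j - s k := le_sub_iff_add_le'.2 (mod_cast hs)
  have ht : (0 : ℝ) ≤ (k : ℕ) - (j : ℕ) - 1 :=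
    sub_nonneg.2 (le_sub_iff_add_le'.2 (mod_cast hjk))
  have hsplit (c : ℝ) : c + a / 2 * ((k : ℕ) - (j : ℕ)) =
      c + a / 2 * ((k : ℕ) - (j : ℕ) - 1) + a / 2 := by ring
  rw [cPrimeFactor, hsplit 1, hsplit (s j - s k)]
  exact div_add_le_div_add_of_le (by positivity) (by gcongr) (by positivity)

theorem inv_one_add_mul_le_cPrime (ha : 0 < a) (hle : ∀ k < j, s j ≤ s k)
    (hlt : ∀ k, j < k → s k < s j) :
    (1 + a / 2 * ((r : ℝ) - 1 - (j : ℕ)))⁻¹ ≤ cPrime a s j := by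
  have hnonneg (k : Fin r) (hk : k ∈ Ioi j) :
      0 ≤ (1 + a / 2 * ((k : ℕ) - (j : ℕ) - 1)) / (1 + a / 2 * ((k : ℕ) - (j : ℕ))) := by
    have ht : (1 : ℝ) ≤ (k : ℕ) - (j : ℕ) := le_sub_iff_add_le'.2 (mod_cast mem_Ioi.1 hk)
    have := sub_nonneg.2 ht
    positivity
  have hfactor (k : Fin r) (hk : k ∈ Ioi j) :
      (1 + a / 2 * ((k : ℕ) - (j : ℕ) - 1)) / (1 + a / 2 * ((k : ℕ) - (j : ℕ))) ≤
        cPrimeFactor a s j k :=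
    div_le_cPrimeFactor ha.le (mem_Ioi.1 hk) (hlt k (mem_Ioi.1 hk))
  calc (1 + a / 2 * ((r : ℝ) - 1 - (j : ℕ)))⁻¹
    _ = ∏ k ∈ Ioi j,
          (1 + a / 2 * ((k : ℕ) - (j : ℕ) - 1)) / (1 + a / 2 * ((k : ℕ) - (j : ℕ))) :=
      (prod_Ioi_one_add_mul_div (half_pos ha).le j).symm
    _ ≤ ∏ k ∈ Ioi j, cPrimeFactor a s j k := prod_le_prod hnonneg hfactor
    _ ≤ ∏ k ∈ univ.erase j, cPrimeFactor a s j k := by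
      refine prod_le_prod_of_subset_of_one_le
        (fun k hk ↦ mem_erase.2 ⟨(mem_Ioi.1 hk).ne', mem_univ k⟩)
        (fun k hk ↦ (hnonneg k hk).trans (hfactor k hk)) fun k hk hk' ↦ ?_
      have hkj : k < j := (not_lt.1 (mt mem_Ioi.2 hk')).lt_of_ne (ne_of_mem_erase hk)
      exact one_le_cPrimeFactor ha hkj (hle k hkj)
    _ = cPrime a s j := (cPrime_eq_prod_cPrimeFactor a s j).symm

theorem cPrime_pos_and_inv_le_general (ha : 0 < a) (hle : ∀ k < j, s j ≤ s k)
    (hlt : ∀ k, j < k → s k < s j) :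
    0 < cPrime a s j ∧ 1 / cPrime a s j ≤ 1 + a / 2 * ((r : ℝ) - 1 - (j : ℕ)) := by
  have hr : (0 : ℝ) ≤ r - 1 - (j : ℕ) := by
    rw [sub_sub, sub_nonneg, add_comm]
    exact_mod_cast j.isLt
  have hlow : (1 + a / 2 * ((r : ℝ) - 1 - (j : ℕ)))⁻¹ ≤ cPrime a s j :=
    inv_one_add_mul_le_cPrime ha hle hlt
  have hpos : 0 < cPrime a s j := lt_of_lt_of_le (by positivity) hlow
  exact ⟨hpos, one_div (cPrime a s j) ▸ inv_le_of_inv_le₀ (by positivity) hlow⟩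

end CPrime

/-- Inequality (3.2) in the proof of Theorem 3.4: if `s` is a signature such that
`s − ε_j` is again a signature, then `c'_s(j) > 0` and
`1/c'_s(j) ≤ (1 + (a/2)(r−1))^r`, equivalently `c'_s(j) ≥ (1 + (a/2)(r−1))^{−r}`. -/
theorem cPrime_pos_and_inv_le (r : ℕ) (hr : 0 < r) (a : ℝ) (ha : 0 < a)
    (s : Fin r → ℕ) (hs : Antitone s) (j : Fin r)
    (hj1 : 1 ≤ s j) (hj2 : Antitone (Function.update s j (s j - 1))) :
    0 < cPrime a s j ∧
      1 / cPrime a s j ≤ (1 + (a / 2) * ((r : ℝ) - 1)) ^ r ∧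
      ((1 + (a / 2) * ((r : ℝ) - 1)) ^ r)⁻¹ ≤ cPrime a s j := by
  obtain ⟨hpos, hinv⟩ := cPrime_pos_and_inv_le_general ha (fun k hk ↦ hs hk.le)
    fun k hk ↦ lt_of_antitone_update_sub_one hj1 hj2 hk
  have hbound := hinv.trans (one_add_mul_le_one_add_mul_pow (half_pos ha).le j)
  exact ⟨hpos, hbound, inv_le_of_inv_le₀ hpos (one_div (cPrime a s j) ▸ hbound)⟩
end

section
/- With the notation of the context, the following are equivalent: (i) sup{ τ(s) : s a nonzero signature } < ∞; (ii) A := sup{ (a_{s−ε_j}/a_s)·(p − (a/2)(j−1) + s_j − 1) : s a signature, j ∈ {1,…,r}, s − ε_j a signature } < ∞. (This is the analytic content of Theorem 3.4: the multiplication d-tuple on the Hilbert space H^{(a)} is bounded if and only if A is finite.) -/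
open Finset
open scoped Classical

/-- `SigSub s j` says that `s − ε_j` is again a signature: `s j ≥ 1` and the tuple
obtained from `s` by decreasing the `j`-th entry by one is still antitone. -/
def SigSub {r : ℕ} (s : Fin r → ℕ) (j : Fin r) : Prop :=
  1 ≤ s j ∧ Antitone (Function.update s j (s j - 1))

/-- The eigenvalue `τ(s)` of `Σ_i M_i M_i^*` on the Peter–Weyl component `P_s`,
for the Hilbert space `H^{(a)}` with weights `w s = a_s`; here
`p = 1 + (a/2)(r−1) + b` plays the role of `d/r`.  The sum extends over those `j`
for which `s − ε_j` is a signature (the other terms vanish). -/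
noncomputable def tau {r : ℕ} (a b : ℝ) (w : (Fin r → ℕ) → ℝ) (s : Fin r → ℕ) : ℝ :=
  ∑ j ∈ Finset.univ.filter (fun j : Fin r => SigSub s j),
    (w (Function.update s j (s j - 1)) / w s) *
      ((1 + (a / 2) * ((r : ℝ) - 1) + b) - (a / 2) * ((j : ℕ) : ℝ) + (s j : ℝ) - 1) *
      (((a / 2) * ((r : ℝ) - 1 - ((j : ℕ) : ℝ)) + (s j : ℝ)) /
        (b + (a / 2) * ((r : ℝ) - 1 - ((j : ℕ) : ℝ)) + (s j : ℝ))) *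
      cPrime a s j

/-!
In the coordinates `x_j = s_j + (a/2)(r − j)` the coefficient is
`c'_s(j) = ∏_{k ≠ j} (x_j − x_k − a/2) / (x_j − x_k)`, while `p − (a/2)(j − 1) + s_j − 1 = b + x_j`.
If `s − ε_j` is a signature then `x_j ≥ 1`, and the `x_k` with `k ≠ j` keep away from `x_j`: they
exceed it by at least `a/2` or stay below it by at least `1 + a/2`. Hence the factor multiplying
`(a_{s−ε_j}/a_s)(b + x_j)` in `τ(s)` lies between two positive constants independent of `s`, so
`τ(s)` is comparable to the largest of the at most `r` nonnegative quantities
`(a_{s−ε_j}/a_s)(b + x_j)`.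
-/

section OrderedField

variable {𝕜 : Type*} [Field 𝕜] [LinearOrder 𝕜] [IsStrictOrderedRing 𝕜]

theorem bddAbove_sum_mul_iff {ι κ : Type*} {S : Set ι} {J : ι → Finset κ} {u c : ι → κ → 𝕜}
    {n : ℕ} {m M : 𝕜} (hJ : ∀ i ∈ S, #(J i) ≤ n) (hm : 0 < m)
    (hu : ∀ i ∈ S, ∀ j ∈ J i, 0 ≤ u i j) (hc : ∀ i ∈ S, ∀ j ∈ J i, c i j ∈ Set.Icc m M) :
    BddAbove {x | ∃ i ∈ S, x = ∑ j ∈ J i, u i j * c i j} ↔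
      BddAbove {x | ∃ i ∈ S, ∃ j ∈ J i, x = u i j} := by
  constructor
  · rintro ⟨B, hB⟩
    refine ⟨B / m, ?_⟩
    rintro _ ⟨i, hi, j, hj, rfl⟩
    have term_nonneg : ∀ k ∈ J i, 0 ≤ u i k * c i k := fun k hk =>
      mul_nonneg (hu i hi k hk) (hm.le.trans (hc i hi k hk).1)
    rw [le_div_iff₀ hm]
    calc u i j * m ≤ u i j * c i j := mul_le_mul_of_nonneg_left (hc i hi j hj).1 (hu i hi j hj)
      _ ≤ ∑ k ∈ J i, u i k * c i k := single_le_sum term_nonneg hj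
      _ ≤ B := hB ⟨i, hi, rfl⟩
  · rintro ⟨A, hA⟩
    refine ⟨n • (max A 0 * max M 0), ?_⟩
    rintro _ ⟨i, hi, rfl⟩
    have term_le : ∀ j ∈ J i, u i j * c i j ≤ max A 0 * max M 0 := fun j hj =>
      mul_le_mul (le_max_of_le_left (hA ⟨i, hi, j, hj, rfl⟩)) (le_max_of_le_left (hc i hi j hj).2)
        (hm.le.trans (hc i hi j hj).1) (le_max_right A 0)
    calc ∑ j ∈ J i, u i j * c i j ≤ #(J i) • (max A 0 * max M 0) := sum_le_card_nsmul _ _ _ term_le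
      _ ≤ n • (max A 0 * max M 0) := nsmul_le_nsmul_left (by positivity) (hJ i hi)

theorem div_add_mem_uIcc {b x : 𝕜} (hb : -1 < b) (hx : 1 ≤ x) :
    x / (b + x) ∈ Set.uIcc 1 (1 / (1 + b)) := by
  have h1b : 0 < 1 + b := by linarith
  have hbx : 0 < b + x := by linarith
  rw [Set.mem_uIcc]
  rcases le_total 0 b with hb0 | hb0
  · right
    rw [div_le_div_iff₀ h1b hbx, div_le_one hbx]
    constructor <;> nlinarith
  · left
    rw [one_le_div hbx, div_le_div_iff₀ hbx h1b]
    constructor <;> nlinarith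

theorem sub_div_self_mem_Icc_of_le_neg {c t : 𝕜} (hc : 0 < c) (ht : t ≤ -c) :
    (t - c) / t ∈ Set.Icc 1 2 := by
  have ht0 : t < 0 := by linarith
  rw [Set.mem_Icc, le_div_iff_of_neg ht0, div_le_iff_of_neg ht0]
  constructor <;> linarith

theorem sub_div_self_mem_Icc_of_one_add_le {c t : 𝕜} (hc : 0 ≤ c) (ht : 1 + c ≤ t) :
    (t - c) / t ∈ Set.Icc (1 / (1 + c)) 1 := by
  have ht0 : 0 < t := by linarith
  rw [Set.mem_Icc, div_le_div_iff₀ (by linarith) ht0, div_le_one ht0]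
  constructor <;> nlinarith

end OrderedField

section Signature

variable {r : ℕ} {a b : ℝ} {w : (Fin r → ℕ) → ℝ} {s : Fin r → ℕ} {j k : Fin r}

theorem SigSub.ne_zero (h : SigSub s j) : s ≠ 0 := by
  rintro rfl
  exact absurd h.1 (by simp)

theorem SigSub.lt_of_lt (h : SigSub s j) (hjk : j < k) : s k < s j := by
  have hle : s k ≤ s j - 1 := by simpa [hjk.ne'] using h.2 hjk.le
  have hpos := h.1
  omega

/-- The coordinate `s_j + (a/2)(r − j)` of a signature, in which `cPrime` depends only on
differences. As `Fin r` counts from `0`, the index `j` of the paper is `j + 1` here. -/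
noncomputable def shiftedPart (a : ℝ) (s : Fin r → ℕ) (j : Fin r) : ℝ :=
  (a / 2) * ((r : ℝ) - 1 - ((j : ℕ) : ℝ)) + (s j : ℝ)

/-- The quantity `(a_{s−ε_j}/a_s)·(p − (a/2)(j−1) + s_j − 1)` whose supremum is the number `A` of
the paper, with the second factor written as `b + shiftedPart a s j`. -/
noncomputable def shiftedWeightRatio (a b : ℝ) (w : (Fin r → ℕ) → ℝ) (s : Fin r → ℕ)
    (j : Fin r) : ℝ :=
  (w (Function.update s j (s j - 1)) / w s) * (b + shiftedPart a s j)

theorem shiftedWeightRatio_eq (a b : ℝ) (w : (Fin r → ℕ) → ℝ) (s : Fin r → ℕ) (j : Fin r) :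
    shiftedWeightRatio a b w s j = (w (Function.update s j (s j - 1)) / w s) *
      ((1 + (a / 2) * ((r : ℝ) - 1) + b) - (a / 2) * ((j : ℕ) : ℝ) + (s j : ℝ) - 1) := by
  unfold shiftedWeightRatio shiftedPart
  ring

theorem tau_eq_sum_shiftedWeightRatio_mul (a b : ℝ) (w : (Fin r → ℕ) → ℝ) (s : Fin r → ℕ) :
    tau a b w s = ∑ j with SigSub s j, shiftedWeightRatio a b w s j *
      (shiftedPart a s j / (b + shiftedPart a s j) * cPrime a s j) := by
  simp only [tau, shiftedWeightRatio_eq, shiftedPart, mul_assoc, add_assoc]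

theorem cPrime_eq_prod_shiftedPart (a : ℝ) (s : Fin r → ℕ) (j : Fin r) :
    cPrime a s j = ∏ k ∈ univ.erase j, (shiftedPart a s j - shiftedPart a s k - a / 2) /
      (shiftedPart a s j - shiftedPart a s k) := by
  unfold cPrime shiftedPart
  congr! 2 <;> ring

theorem shiftedPart_add_le {n : ℕ} (ha : 0 ≤ a) (hjk : j < k) (hs : s k + n ≤ s j) :
    shiftedPart a s k + n + a / 2 ≤ shiftedPart a s j := by
  have hjk' : ((j : ℕ) : ℝ) + 1 ≤ ((k : ℕ) : ℝ) := by exact_mod_cast hjk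
  have hs' : (s k : ℝ) + n ≤ s j := by exact_mod_cast hs
  unfold shiftedPart
  nlinarith

theorem SigSub.one_le_shiftedPart (h : SigSub s j) (ha : 0 ≤ a) : 1 ≤ shiftedPart a s j := by
  have hsj : (1 : ℝ) ≤ s j := by exact_mod_cast h.1
  have hj : ((j : ℕ) : ℝ) + 1 ≤ r := by exact_mod_cast j.isLt
  unfold shiftedPart
  nlinarith

theorem SigSub.cPrime_factor_mem_Icc (h : SigSub s j) (ha : 0 < a) (hs : Antitone s)
    (hkj : k ≠ j) :
    (shiftedPart a s j - shiftedPart a s k - a / 2) / (shiftedPart a s j - shiftedPart a s k) ∈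
      Set.Icc (1 / (1 + a / 2)) 2 := by
  rcases hkj.lt_or_gt with hlt | hgt
  · have gap := shiftedPart_add_le (n := 0) ha.le hlt (hs hlt.le)
    have hmem := sub_div_self_mem_Icc_of_le_neg (c := a / 2)
      (t := shiftedPart a s j - shiftedPart a s k) (by positivity) (by push_cast at gap; linarith)
    exact Set.Icc_subset_Icc_left (div_le_one_of_le₀ (by linarith) (by positivity)) hmem
  · have gap := shiftedPart_add_le (n := 1) ha.le hgt (h.lt_of_lt hgt)
    have hmem := sub_div_self_mem_Icc_of_one_add_le (c := a / 2)
      (t := shiftedPart a s j - shiftedPart a s k) (by positivity) (by push_cast at gap; linarith)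
    exact Set.Icc_subset_Icc_right one_le_two hmem

theorem SigSub.cPrime_mem_Icc (h : SigSub s j) (ha : 0 < a) (hs : Antitone s) :
    cPrime a s j ∈ Set.Icc ((1 / (1 + a / 2)) ^ (r - 1)) (2 ^ (r - 1)) := by
  have hcard : #(univ.erase j) = r - 1 := by simp
  have factor_mem := fun k (hk : k ∈ univ.erase j) =>
    h.cPrime_factor_mem_Icc ha hs (ne_of_mem_erase hk)
  have hpos : 0 ≤ 1 / (1 + a / 2) := by positivity
  rw [cPrime_eq_prod_shiftedPart, ← hcard, ← prod_const, ← prod_const]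
  exact ⟨prod_le_prod (fun _ _ => hpos) fun k hk => (factor_mem k hk).1,
    prod_le_prod (fun k hk => hpos.trans (factor_mem k hk).1) fun k hk => (factor_mem k hk).2⟩

theorem SigSub.tau_factor_mem_Icc (h : SigSub s j) (ha : 0 < a) (hb : -1 < b) (hs : Antitone s) :
    shiftedPart a s j / (b + shiftedPart a s j) * cPrime a s j ∈
      Set.Icc (min 1 (1 / (1 + b)) * (1 / (1 + a / 2)) ^ (r - 1))
        (max 1 (1 / (1 + b)) * 2 ^ (r - 1)) := by
  have hx := h.one_le_shiftedPart ha.le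
  obtain ⟨ratio_ge, ratio_le⟩ := div_add_mem_uIcc hb hx
  obtain ⟨cPrime_ge, cPrime_le⟩ := h.cPrime_mem_Icc ha hs
  have ratio_nonneg : 0 ≤ shiftedPart a s j / (b + shiftedPart a s j) :=
    div_nonneg (by linarith) (by linarith)
  have pow_bound_nonneg : 0 ≤ (1 / (1 + a / 2)) ^ (r - 1) := by positivity
  exact ⟨mul_le_mul ratio_ge cPrime_ge pow_bound_nonneg ratio_nonneg,
    mul_le_mul ratio_le cPrime_le (pow_bound_nonneg.trans cPrime_ge) (by positivity)⟩

theorem SigSub.shiftedWeightRatio_nonneg (h : SigSub s j) (ha : 0 ≤ a) (hb : -1 ≤ b)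
    (hw : 0 ≤ w s) (hw' : 0 ≤ w (Function.update s j (s j - 1))) :
    0 ≤ shiftedWeightRatio a b w s j :=
  mul_nonneg (div_nonneg hw' hw) (by linarith [h.one_le_shiftedPart ha])

theorem tau_bddAbove_iff_general (ha : 0 < a) (hb : -1 < b)
    (hw : ∀ s : Fin r → ℕ, Antitone s → 0 < w s) :
    BddAbove {x : ℝ | ∃ s : Fin r → ℕ, Antitone s ∧ s ≠ 0 ∧ x = tau a b w s} ↔
      BddAbove {x : ℝ | ∃ (s : Fin r → ℕ) (j : Fin r), Antitone s ∧ SigSub s j ∧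
        x = (w (Function.update s j (s j - 1)) / w s) *
          ((1 + (a / 2) * ((r : ℝ) - 1) + b) - (a / 2) * ((j : ℕ) : ℝ) + (s j : ℝ) - 1)} := by
  let nonzeroSignatures : Set (Fin r → ℕ) := {s | Antitone s ∧ s ≠ 0}
  let removable (s : Fin r → ℕ) : Finset (Fin r) := {j | SigSub s j}
  have tau_values : {x : ℝ | ∃ s : Fin r → ℕ, Antitone s ∧ s ≠ 0 ∧ x = tau a b w s} =
      {x | ∃ s ∈ nonzeroSignatures, x = ∑ j ∈ removable s, shiftedWeightRatio a b w s j *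
        (shiftedPart a s j / (b + shiftedPart a s j) * cPrime a s j)} := by
    simp only [nonzeroSignatures, removable, tau_eq_sum_shiftedWeightRatio_mul,
      Set.mem_ofPred_eq, and_assoc]
  have ratio_values : {x : ℝ | ∃ (s : Fin r → ℕ) (j : Fin r), Antitone s ∧ SigSub s j ∧
        x = shiftedWeightRatio a b w s j} =
      {x | ∃ s ∈ nonzeroSignatures, ∃ j ∈ removable s, x = shiftedWeightRatio a b w s j} := by
    ext x
    simp only [removable, mem_filter_univ]
    exact ⟨fun ⟨s, j, hs, h, hx⟩ => ⟨s, ⟨hs, h.ne_zero⟩, j, h, hx⟩,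
      fun ⟨s, hs, j, h, hx⟩ => ⟨s, j, hs.1, h, hx⟩⟩
  simp only [← shiftedWeightRatio_eq]
  rw [tau_values, ratio_values]
  have h1b : 0 < 1 + b := by linarith
  refine bddAbove_sum_mul_iff (m := min 1 (1 / (1 + b)) * (1 / (1 + a / 2)) ^ (r - 1))
    (M := max 1 (1 / (1 + b)) * 2 ^ (r - 1)) (fun s _ => card_le_univ (removable s))
    (by positivity) (fun s hs j hj => ?_) (fun s hs j hj => ?_) <;>
    have h : SigSub s j := (mem_filter_univ j).1 hj
  · exact h.shiftedWeightRatio_nonneg ha.le hb.le (hw s hs.1).le (hw _ h.2).le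
  · exact h.tau_factor_mem_Icc ha hb hs.1

end Signature

/-- Theorem 3.4: the multiplication tuple on `H^{(a)}` is bounded
(`sup{τ(s) : s ≠ 0 a signature} < ∞`) if and only if
`A = sup (a_{s−ε_j}/a_s)·(p − (a/2)(j−1) + s_j − 1)` is finite. -/
theorem tau_bddAbove_iff (r : ℕ) (hr : 0 < r) (a b : ℝ) (ha : 0 < a) (hb : 0 ≤ b)
    (w : (Fin r → ℕ) → ℝ) (hw : ∀ s : Fin r → ℕ, Antitone s → 0 < w s) :
    BddAbove {x : ℝ | ∃ s : Fin r → ℕ, Antitone s ∧ s ≠ 0 ∧ x = tau a b w s} ↔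
      BddAbove {x : ℝ | ∃ (s : Fin r → ℕ) (j : Fin r), Antitone s ∧ SigSub s j ∧
        x = (w (Function.update s j (s j - 1)) / w s) *
          ((1 + (a / 2) * ((r : ℝ) - 1) + b) - (a / 2) * ((j : ℕ) : ℝ) + (s j : ℝ) - 1)} :=
  tau_bddAbove_iff_general ha (by linarith) hw
end

section
/- Let r be a positive integer, a > 0, b ≥ 0 reals, p = 1 + (a/2)(r−1) + b, and let ν > (a/2)(r−1) be real. Then for every signature s and every j ∈ {1,…,r} such that s − ε_j is a signature, one has ((ν)_{s−ε_j}/(ν)_s)·((p)_s/(p)_{s−ε_j}) = (p − (a/2)(j−1) + s_j − 1)/(ν − (a/2)(j−1) + s_j − 1), and this quantity is at most max{ 1, (1+b)/(ν − (a/2)(r−1)) }. In particular the supremum of these quantities over all such pairs (s, j) is finite. (Corollary 3.5: hence the multiplication d-tuple on the weighted Bergman space H^{(ν)} is bounded for ν > (a/2)(r−1).) -/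
open Finset

/-- The generalized Pochhammer symbol
`(ν)_s = ∏_{j=1}^r ∏_{l=1}^{s_j} (ν − (a/2)(j−1) + l − 1)` (zero-based indices). -/
noncomputable def poch {r : ℕ} (a ν : ℝ) (s : Fin r → ℕ) : ℝ :=
  ∏ j : Fin r, ∏ l ∈ Finset.range (s j), (ν - (a / 2) * ((j : ℕ) : ℝ) + (l : ℝ))

/-!
Subtracting `ε_j` from `s` removes a single factor from each Pochhammer symbol, so the ratio is
`(p' + t) / (ν' + t)`, where `p'` and `ν'` are `p` and `ν` minus `(a/2)(r−1)` and
`t = (a/2)(r−j) + s_j − 1 ≥ 0` for one-based `j`. This is a weighted mean of `p'/ν'` and `1`, hence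
at most the larger of the two.
-/

theorem add_div_add_le_max_one_div {K : Type*} [Field K] [LinearOrder K] [IsStrictOrderedRing K]
    {x y t : K} (hy : 0 < y) (ht : 0 ≤ t) : (x + t) / (y + t) ≤ max 1 (x / y) := by
  rw [div_le_iff₀ (add_pos_of_pos_of_nonneg hy ht), mul_add]
  exact add_le_add ((div_le_iff₀ hy).1 (le_max_right _ _))
    (le_mul_of_one_le_left ht (le_max_left _ _))

section

variable {r : ℕ}

theorem poch_update_succ (a ν : ℝ) (s : Fin r → ℕ) (j : Fin r) (n : ℕ) :
    poch a ν (Function.update s j (n + 1)) =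
      poch a ν (Function.update s j n) * (ν - (a / 2) * ((j : ℕ) : ℝ) + n) := by
  simp only [poch, Function.apply_update fun (i : Fin r) m ↦
      ∏ l ∈ range m, (ν - (a / 2) * ((i : ℕ) : ℝ) + (l : ℝ)),
    prod_update_of_mem (mem_univ j), prod_range_succ]
  ring

theorem poch_eq_poch_update_sub_one_mul (a ν : ℝ) {s : Fin r → ℕ} {j : Fin r} (hj : 1 ≤ s j) :
    poch a ν s = poch a ν (Function.update s j (s j - 1)) *
      (ν - (a / 2) * ((j : ℕ) : ℝ) + (s j : ℝ) - 1) := by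
  have h := poch_update_succ a ν s j (s j - 1)
  rwa [Nat.sub_add_cancel hj, Function.update_eq_self, Nat.cast_pred hj, ← add_sub_assoc] at h

variable {a ν p : ℝ}

theorem poch_update_div_mul_div_poch_update {s : Fin r → ℕ} {j : Fin r} (hj : 1 ≤ s j)
    (hν : poch a ν (Function.update s j (s j - 1)) ≠ 0)
    (hp : poch a p (Function.update s j (s j - 1)) ≠ 0) :
    (poch a ν (Function.update s j (s j - 1)) / poch a ν s) *
        (poch a p s / poch a p (Function.update s j (s j - 1))) =
      (p - (a / 2) * ((j : ℕ) : ℝ) + (s j : ℝ) - 1) /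
        (ν - (a / 2) * ((j : ℕ) : ℝ) + (s j : ℝ) - 1) := by
  rw [poch_eq_poch_update_sub_one_mul a ν hj, poch_eq_poch_update_sub_one_mul a p hj,
    mul_div_cancel_left₀ _ hp, div_mul_cancel_left₀ hν, inv_mul_eq_div]

theorem half_mul_val_le_half_mul_sub_one (ha : 0 ≤ a) (j : Fin r) :
    (a / 2) * ((j : ℕ) : ℝ) ≤ (a / 2) * ((r : ℝ) - 1) := by
  have hjr : ((j : ℕ) : ℝ) + 1 ≤ r := mod_cast j.isLt
  exact mul_le_mul_of_nonneg_left (le_sub_iff_add_le.2 hjr) (div_nonneg ha zero_le_two)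

theorem poch_pos (ha : 0 ≤ a) (hν : (a / 2) * ((r : ℝ) - 1) < ν) (s : Fin r → ℕ) :
    0 < poch a ν s :=
  prod_pos fun i _ ↦ prod_pos fun l _ ↦ add_pos_of_pos_of_nonneg
    (sub_pos.2 ((half_mul_val_le_half_mul_sub_one ha i).trans_lt hν)) l.cast_nonneg

theorem poch_factor_div_le_max (ha : 0 ≤ a) (hν : (a / 2) * ((r : ℝ) - 1) < ν) (j : Fin r)
    {m : ℝ} (hm : 1 ≤ m) :
    (p - (a / 2) * ((j : ℕ) : ℝ) + m - 1) / (ν - (a / 2) * ((j : ℕ) : ℝ) + m - 1) ≤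
      max 1 ((p - (a / 2) * ((r : ℝ) - 1)) / (ν - (a / 2) * ((r : ℝ) - 1))) := by
  set c := (a / 2) * ((r : ℝ) - 1)
  set t := c - (a / 2) * ((j : ℕ) : ℝ) + (m - 1) with ht_def
  have ht : 0 ≤ t :=
    add_nonneg (sub_nonneg.2 (half_mul_val_le_half_mul_sub_one ha j)) (sub_nonneg.2 hm)
  calc
    _ = (p - c + t) / (ν - c + t) := by rw [ht_def]; congr 1 <;> ring
    _ ≤ max 1 ((p - c) / (ν - c)) := add_div_add_le_max_one_div (sub_pos.2 hν) ht

end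

theorem bergman_ratio_eq_and_bounded_general {r : ℕ} {a ν p : ℝ} (ha : 0 ≤ a)
    (hν : (a / 2) * ((r : ℝ) - 1) < ν) (hp : (a / 2) * ((r : ℝ) - 1) < p) :
    (∀ (s : Fin r → ℕ) (j : Fin r), 1 ≤ s j →
      (poch a ν (Function.update s j (s j - 1)) / poch a ν s) *
          (poch a p s / poch a p (Function.update s j (s j - 1))) =
        (p - (a / 2) * ((j : ℕ) : ℝ) + (s j : ℝ) - 1) /
          (ν - (a / 2) * ((j : ℕ) : ℝ) + (s j : ℝ) - 1) ∧
      (p - (a / 2) * ((j : ℕ) : ℝ) + (s j : ℝ) - 1) /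
          (ν - (a / 2) * ((j : ℕ) : ℝ) + (s j : ℝ) - 1) ≤
        max 1 ((p - (a / 2) * ((r : ℝ) - 1)) / (ν - (a / 2) * ((r : ℝ) - 1)))) ∧
    BddAbove {x : ℝ | ∃ (s : Fin r → ℕ) (j : Fin r), 1 ≤ s j ∧
      x = (poch a ν (Function.update s j (s j - 1)) / poch a ν s) *
        (poch a p s / poch a p (Function.update s j (s j - 1)))} := by
  have ratio_eq (s : Fin r → ℕ) (j : Fin r) (hj : 1 ≤ s j) :=
    poch_update_div_mul_div_poch_update hj (poch_pos ha hν _).ne' (poch_pos ha hp _).ne'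
  have ratio_le (s : Fin r → ℕ) (j : Fin r) (hj : 1 ≤ s j) :=
    poch_factor_div_le_max (p := p) ha hν j (Nat.one_le_cast.2 hj)
  refine ⟨fun s j hj ↦ ⟨ratio_eq s j hj, ratio_le s j hj⟩,
    max 1 ((p - (a / 2) * ((r : ℝ) - 1)) / (ν - (a / 2) * ((r : ℝ) - 1))), ?_⟩
  rintro _ ⟨s, j, hj, rfl⟩
  exact (ratio_eq s j hj).trans_le (ratio_le s j hj)

/-- Corollary 3.5: for `ν > (a/2)(r−1)` and `p = 1 + (a/2)(r−1) + b`, whenever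
`s − ε_j` is a signature one has
`((ν)_{s−ε_j}/(ν)_s)·((p)_s/(p)_{s−ε_j}) = (p − (a/2)(j−1) + s_j − 1)/(ν − (a/2)(j−1) + s_j − 1)`,
this quantity is at most `max{1, (1+b)/(ν − (a/2)(r−1))}`, and in particular the
supremum of these quantities is finite (so the multiplication tuple on `H^{(ν)}`
is bounded). -/
theorem bergman_ratio_eq_and_bounded (r : ℕ) (hr : 0 < r) (a b : ℝ) (ha : 0 < a) (hb : 0 ≤ b)
    (ν : ℝ) (hν : (a / 2) * ((r : ℝ) - 1) < ν) :
    (∀ (s : Fin r → ℕ) (j : Fin r), Antitone s → SigSub s j →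
      (poch a ν (Function.update s j (s j - 1)) / poch a ν s) *
          (poch a (1 + (a / 2) * ((r : ℝ) - 1) + b) s /
            poch a (1 + (a / 2) * ((r : ℝ) - 1) + b) (Function.update s j (s j - 1))) =
        ((1 + (a / 2) * ((r : ℝ) - 1) + b) - (a / 2) * ((j : ℕ) : ℝ) + (s j : ℝ) - 1) /
          (ν - (a / 2) * ((j : ℕ) : ℝ) + (s j : ℝ) - 1) ∧
      ((1 + (a / 2) * ((r : ℝ) - 1) + b) - (a / 2) * ((j : ℕ) : ℝ) + (s j : ℝ) - 1) /
          (ν - (a / 2) * ((j : ℕ) : ℝ) + (s j : ℝ) - 1) ≤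
        max 1 ((1 + b) / (ν - (a / 2) * ((r : ℝ) - 1)))) ∧
    BddAbove {x : ℝ | ∃ (s : Fin r → ℕ) (j : Fin r), Antitone s ∧ SigSub s j ∧
      x = (poch a ν (Function.update s j (s j - 1)) / poch a ν s) *
        (poch a (1 + (a / 2) * ((r : ℝ) - 1) + b) s /
          poch a (1 + (a / 2) * ((r : ℝ) - 1) + b) (Function.update s j (s j - 1)))} := by
  obtain ⟨ratio, bdd⟩ := bergman_ratio_eq_and_bounded_general ha.le hν
    (p := 1 + (a / 2) * ((r : ℝ) - 1) + b) (by linarith)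
  rw [show 1 + b = 1 + (a / 2) * ((r : ℝ) - 1) + b - (a / 2) * ((r : ℝ) - 1) by ring]
  refine ⟨fun s j _ hs ↦ ratio s j hs.1, bdd.mono ?_⟩
  exact fun _ ⟨s, j, _, hs, hx⟩ ↦ ⟨s, j, hs.1, hx⟩
end

section
/- Let r be a positive integer, a > 0, b ≥ 0, ε > 0 reals. Then for every nonzero signature s, Σ, over those j ∈ {1,…,r} for which s − ε_j is a signature, of (b + (a/2)(r−j) + s_j)/((a/2)(r−j) + s_j + ε − 1) ≥ min{ 1, 1/ε }; in particular this sum is bounded below by 1 when ε ≤ b+1 and by 1/ε when ε ≥ b+1. (Corollary 3.7: taking ν = (a/2)(r−1) + ε, this shows that the quantity B of Theorem 3.6 is positive for the weighted Bergman space H^{(ν)}, so the range of D_{M^{(ν)*}} is closed.) -/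
open Finset
open scoped Classical

/-!
The last index `j` with `s j ≠ 0` can always be decreased, and every summand is nonnegative, so the
sum is at least its `j`-th summand `(b + x) / (x + ε - 1)`, where `x = (a/2)(r-j) + s j ≥ 1`.
Cross-multiplying, this summand is at least `1` exactly when `ε ≤ b + 1`, and at least `1 / ε`
exactly when `b ε + (x - 1) (ε - 1) ≥ 0`.
-/

section Decrement

variable {ι : Type*} [PartialOrder ι] [DecidableEq ι]

theorem antitone_update_of_le {α : Type*} [Preorder α] {f : ι → α} (hf : Antitone f) {j : ι}
    {a : α} (ha : a ≤ f j) (hgt : ∀ i, j < i → f i ≤ a) : Antitone (Function.update f j a) := by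
  intro p q hpq
  rcases eq_or_ne p j with rfl | hp <;> rcases eq_or_ne q p with rfl | hqp
  · exact le_rfl
  · simpa only [Function.update_self, Function.update_of_ne hqp] using
      hgt q (lt_of_le_of_ne hpq hqp.symm)
  · exact le_rfl
  · rw [Function.update_of_ne hp]
    exact (update_le_self_iff.mpr ha q).trans (hf hpq)

/-- The condition `SigSub` for signatures indexed by an arbitrary partial order: lowering the entry
of `s` at `j` by one is possible in `ℕ` and leaves an antitone function. -/
def IsDecrementable (s : ι → ℕ) (j : ι) : Prop :=
  1 ≤ s j ∧ Antitone (Function.update s j (s j - 1))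

theorem isDecrementable_of_maximal_support {s : ι → ℕ} (hs : Antitone s) {j : ι}
    (hj : Maximal (· ∈ Function.support s) j) : IsDecrementable s j := by
  refine ⟨Nat.one_le_iff_ne_zero.mpr hj.prop,
    antitone_update_of_le hs (Nat.sub_le _ _) fun i hi => ?_⟩
  have hi0 : s i = 0 := Function.notMem_support.mp (hj.not_prop_of_gt hi)
  exact hi0.le.trans (Nat.zero_le _)

theorem exists_isDecrementable [Finite ι] {s : ι → ℕ} (hs : Antitone s) (hs0 : s ≠ 0) :
    ∃ j, IsDecrementable s j :=
  let ⟨j, hj⟩ := (Function.support s).toFinite.exists_maximal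
    (Function.support_nonempty_iff.mpr hs0)
  ⟨j, isDecrementable_of_maximal_support hs hj⟩

end Decrement

section Field

variable {K : Type*} [Field K] [LinearOrder K] [IsStrictOrderedRing K] {b ε x : K}

theorem one_le_add_div_add_sub_one (hε : 0 < ε) (hx : 1 ≤ x) (h : ε ≤ b + 1) :
    1 ≤ (b + x) / (x + ε - 1) := by
  rw [one_le_div (by linarith)]
  linarith

theorem one_div_le_add_div_add_sub_one (hb : 0 ≤ b) (hε : 1 ≤ ε) (hx : 1 ≤ x) :
    1 / ε ≤ (b + x) / (x + ε - 1) := by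
  have hcross : 0 ≤ b * ε + (x - 1) * (ε - 1) :=
    add_nonneg (mul_nonneg hb (by linarith)) (mul_nonneg (by linarith) (by linarith))
  rw [div_le_div_iff₀ (by linarith) (by linarith)]
  linarith

theorem bergman_sum_lower_bound_general {ι : Type*} [PartialOrder ι] [DecidableEq ι] [Fintype ι]
    {c : ι → K} (hb : 0 ≤ b) (hε : 0 < ε) (hc : ∀ j, 0 ≤ c j) {s : ι → ℕ}
    (hs : Antitone s) (hs0 : s ≠ 0) :
    let S : K := ∑ j with IsDecrementable s j, (b + c j + s j) / (c j + s j + ε - 1)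
    min 1 (1 / ε) ≤ S ∧ (ε ≤ b + 1 → 1 ≤ S) ∧ (b + 1 ≤ ε → 1 / ε ≤ S) := by
  intro S
  have one_le_shift {j : ι} (hj : IsDecrementable s j) : 1 ≤ c j + s j :=
    le_add_of_nonneg_of_le (hc j) (Nat.one_le_cast.mpr hj.1)
  obtain ⟨j, hj⟩ := exists_isDecrementable hs hs0
  have term_le : (b + (c j + s j)) / (c j + s j + ε - 1) ≤ S := by
    rw [← add_assoc]
    refine single_le_sum (f := fun j => (b + c j + s j) / (c j + s j + ε - 1))
      (fun i hi => ?_) (mem_filter_univ j |>.mpr hj)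
    have := one_le_shift (mem_filter_univ i |>.mp hi)
    exact div_nonneg (by linarith) (by linarith)
  have one_le : ε ≤ b + 1 → 1 ≤ S := fun h =>
    (one_le_add_div_add_sub_one hε (one_le_shift hj) h).trans term_le
  have one_div_le : b + 1 ≤ ε → 1 / ε ≤ S := fun h =>
    (one_div_le_add_div_add_sub_one hb (by linarith) (one_le_shift hj)).trans term_le
  exact ⟨min_le_iff.mpr ((le_total ε (b + 1)).imp one_le one_div_le), one_le, one_div_le⟩

end Field

/-- Corollary 3.7: for every `ε > 0` and every nonzero signature `s`, the sum
`Σ_j (b + (a/2)(r−j) + s_j)/((a/2)(r−j) + s_j + ε − 1)`, over those `j` for which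
`s − ε_j` is a signature, is bounded below by `min{1, 1/ε}`; in fact it is at least
`1` when `ε ≤ b+1` and at least `1/ε` when `ε ≥ b+1`.  (Taking `ν = (a/2)(r−1) + ε`
this shows that the range of `D_{M^{(ν)*}}` is closed.) -/
theorem bergman_sum_lower_bound (r : ℕ) (hr : 0 < r) (a b ε : ℝ)
    (ha : 0 < a) (hb : 0 ≤ b) (hε : 0 < ε)
    (s : Fin r → ℕ) (hs : Antitone s) (hs0 : s ≠ 0) :
    let S : ℝ := ∑ j ∈ Finset.univ.filter (fun j : Fin r => SigSub s j),
      (b + (a / 2) * ((r : ℝ) - 1 - ((j : ℕ) : ℝ)) + (s j : ℝ)) /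
        ((a / 2) * ((r : ℝ) - 1 - ((j : ℕ) : ℝ)) + (s j : ℝ) + ε - 1)
    min 1 (1 / ε) ≤ S ∧ (ε ≤ b + 1 → 1 ≤ S) ∧ (b + 1 ≤ ε → 1 / ε ≤ S) := by
  have shift_nonneg (j : Fin r) : 0 ≤ a / 2 * ((r : ℝ) - 1 - ((j : ℕ) : ℝ)) :=
    mul_nonneg (half_pos ha).le (sub_nonneg.mpr (le_sub_iff_add_le.mpr (by exact_mod_cast j.2)))
  exact bergman_sum_lower_bound_general hb hε shift_nonneg hs hs0
end

section
/- With the notation of the context, the following are equivalent: (i) the tuples M^{(1)} = (M_1^{(1)},…,M_d^{(1)}) on H_1 and M^{(2)} = (M_1^{(2)},…,M_d^{(2)}) on H_2 are similar, i.e., there exists a bounded invertible linear operator X : H_1 → H_2 with X M_j^{(1)} = M_j^{(2)} X for all j = 1,…,d; (ii) there exist constants α, β > 0 such that α·‖p‖_1 ≤ ‖p‖_2 ≤ β·‖p‖_1 for every polynomial p. (This is the equivalence (i) ⇔ (ii) of Theorem 5.2, stated for multiplication tuples on completions of the polynomial ring; in the paper H_1, H_2 are reproducing kernel Hilbert spaces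 on a bounded domain Ω ⊆ ℂ^d in which the polynomials are dense.) -/
open scoped ComplexInnerProductSpace

/-!
An intertwiner `X` satisfies `X p = p(M⁽²⁾) (X 1)`, so it is determined by `X 1 ∈ H₂`. Since
multiplication by a homogeneous `p` raises degrees by `deg p`, the components of `p(M⁽²⁾) (X 1)`
in degrees up to `deg p` come from the constant term `c` of `X 1` alone: `⟪q, X p⟫₂ = c ⟪q, p⟫₂`
whenever `q` is homogeneous and `deg q ≤ deg p`. Were `c = 0`, the range of `X` would be
orthogonal to `1`; so `c ≠ 0`, and taking `q = p` gives `|c| ‖p‖₂² = |⟪p, X p⟫₂| ≤ ‖p‖₂ ‖X‖ ‖p‖₁`.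
Pythagoras extends this bound from homogeneous polynomials to all of them, and `X⁻¹` gives the
opposite bound. Conversely, when the norms are comparable the identity of the polynomial ring
extends to the completions.
-/

open MvPolynomial

section ExtendsMultiplication

variable {R σ V W : Type*} [CommSemiring R]
  [AddCommMonoid V] [Module R V] [TopologicalSpace V]
  [AddCommMonoid W] [Module R W] [TopologicalSpace W]

/-- The tuple `T` extends multiplication by the variables along `ι`. When `ι` embeds the
polynomials densely, `T` is the tuple of coordinate multiplications `M_j`; but `ι` may be any linear
map, so that the notion also covers `X ∘ ι` for an intertwiner `X`. -/
def ExtendsMultiplication (T : σ → V →L[R] V) (ι : MvPolynomial σ R →ₗ[R] V) : Prop :=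
  ∀ j p, T j (ι p) = ι (X j * p)

lemma ExtendsMultiplication.comp_of_intertwines {S : σ → V →L[R] V} {T : σ → W →L[R] W}
    {ι : MvPolynomial σ R →ₗ[R] V} (hS : ExtendsMultiplication S ι) {L : V →ₗ[R] W}
    (hL : ∀ j v, L (S j v) = T j (L v)) : ExtendsMultiplication T (L ∘ₗ ι) := fun j p => by
  rw [LinearMap.comp_apply, LinearMap.comp_apply, ← hL, hS]

-- The single operator `p(T)` serves every `ι`: it is applied to an embedding `ι` and to `X ∘ ι`.
lemma exists_continuousLinearMap_apply_eq_mul [ContinuousAdd V] [ContinuousConstSMul R V]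
    (T : σ → V →L[R] V) (p : MvPolynomial σ R) :
    ∃ A : V →L[R] V, ∀ ι : MvPolynomial σ R →ₗ[R] V, ExtendsMultiplication T ι →
      ∀ r, A (ι r) = ι (p * r) := by
  induction p using MvPolynomial.induction_on with
  | C a => exact ⟨a • ContinuousLinearMap.id R V, fun ι _ r => by simp [← smul_eq_C_mul]⟩
  | add p q hp hq =>
    obtain ⟨A, hA⟩ := hp
    obtain ⟨B, hB⟩ := hq
    exact ⟨A + B, fun ι hι r => by simp [hA ι hι, hB ι hι, add_mul]⟩
  | mul_X p j hp =>
    obtain ⟨A, hA⟩ := hp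
    refine ⟨A ∘L T j, fun ι hι r => ?_⟩
    rw [ContinuousLinearMap.comp_apply, hι, hA ι hι, mul_assoc]

lemma ExtendsMultiplication.intertwines_of_denseRange [T2Space W] {S : σ → V →L[R] V}
    {T : σ → W →L[R] W} {ι : MvPolynomial σ R →ₗ[R] V} {κ : MvPolynomial σ R →ₗ[R] W}
    (hS : ExtendsMultiplication S ι) (hT : ExtendsMultiplication T κ) (hι : DenseRange ι)
    {L : V →L[R] W} (hL : ∀ p, L (ι p) = κ p) (j : σ) (v : V) : L (S j v) = T j (L v) := by
  have hcomp : L ∘ S j = T j ∘ L :=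
    hι.equalizer (by fun_prop) (by fun_prop) (funext fun p => by simp [hS j p, hT j p, hL])
  exact congrFun hcomp v

end ExtendsMultiplication

section GradedOrthogonal

variable {𝕜 σ H K : Type*} [RCLike 𝕜]
  [NormedAddCommGroup H] [InnerProductSpace 𝕜 H]
  [NormedAddCommGroup K] [InnerProductSpace 𝕜 K]

/-- Homogeneous polynomials of different total degrees have orthogonal images under `ι`: the
standing assumption on the inner product that `ι` pulls back to the polynomials. -/
def GradedOrthogonal (ι : MvPolynomial σ 𝕜 →ₗ[𝕜] H) : Prop :=
  ∀ (m n : ℕ) (p q : MvPolynomial σ 𝕜),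
    p.IsHomogeneous m → q.IsHomogeneous n → m ≠ n → inner 𝕜 (ι p) (ι q) = 0

namespace GradedOrthogonal

lemma orthogonalFamily {ι : MvPolynomial σ 𝕜 →ₗ[𝕜] H} (hι : GradedOrthogonal ι) :
    OrthogonalFamily 𝕜 (fun n => (homogeneousSubmodule σ 𝕜 n).map ι)
      fun n => ((homogeneousSubmodule σ 𝕜 n).map ι).subtypeₗᵢ := by
  rintro m n hmn ⟨_, p, hp, rfl⟩ ⟨_, q, hq, rfl⟩
  exact hι m n p q hp hq hmn

lemma norm_sq_eq_sum_homogeneousComponent {ι : MvPolynomial σ 𝕜 →ₗ[𝕜] H} (hι : GradedOrthogonal ι)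
    (p : MvPolynomial σ 𝕜) :
    ‖ι p‖ ^ 2 = ∑ i ∈ Finset.range (p.totalDegree + 1), ‖ι (homogeneousComponent i p)‖ ^ 2 := by
  have hsum := hι.orthogonalFamily.norm_sum
    (fun i => ⟨ι (homogeneousComponent i p),
      Submodule.mem_map_of_mem (homogeneousComponent_mem i p)⟩)
    (Finset.range (p.totalDegree + 1))
  simpa [← map_sum, sum_homogeneousComponent] using hsum

lemma norm_le_mul_norm_of_isHomogeneous {ι : MvPolynomial σ 𝕜 →ₗ[𝕜] H}
    {κ : MvPolynomial σ 𝕜 →ₗ[𝕜] K} (hι : GradedOrthogonal ι) (hκ : GradedOrthogonal κ) {C : ℝ}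
    (hC : 0 ≤ C) (hhom : ∀ n p, p.IsHomogeneous n → ‖κ p‖ ≤ C * ‖ι p‖) (p : MvPolynomial σ 𝕜) :
    ‖κ p‖ ≤ C * ‖ι p‖ := by
  refine le_of_sq_le_sq ?_ (by positivity)
  rw [mul_pow, hι.norm_sq_eq_sum_homogeneousComponent, hκ.norm_sq_eq_sum_homogeneousComponent,
    Finset.mul_sum]
  gcongr with i
  rw [← mul_pow]
  gcongr
  exact hhom i _ (homogeneousComponent_isHomogeneous i p)

lemma inner_map_mul_right {κ : MvPolynomial σ 𝕜 →ₗ[𝕜] K} (hκ : GradedOrthogonal κ) {n m : ℕ}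
    (hnm : n ≤ m) {q p : MvPolynomial σ 𝕜} (hq : q.IsHomogeneous n) (hp : p.IsHomogeneous m)
    (r : MvPolynomial σ 𝕜) :
    inner 𝕜 (κ q) (κ (p * r)) = coeff 0 r * inner 𝕜 (κ q) (κ p) := by
  have hsum : κ (p * r) =
      ∑ i ∈ Finset.range (r.totalDegree + 1), κ (p * homogeneousComponent i r) := by
    rw [← map_sum, ← Finset.mul_sum, sum_homogeneousComponent]
  rw [hsum, inner_sum, Finset.sum_eq_single_of_mem 0 (by simp)]
  · rw [homogeneousComponent_zero, mul_comm p, ← smul_eq_C_mul, map_smul, inner_smul_right]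
  · intro i _ hi
    exact hκ n (m + i) _ _ hq (hp.mul (homogeneousComponent_isHomogeneous i r)) (by lia)

variable {T : σ → K →L[𝕜] K} {κ ψ : MvPolynomial σ 𝕜 →ₗ[𝕜] K}

-- Both sides are continuous in `ψ 1`, so it is enough to treat `ψ 1 = κ r`.
lemma inner_mul_inner_one (hκ : GradedOrthogonal κ) (hdense : DenseRange κ)
    (hTκ : ExtendsMultiplication T κ) (hTψ : ExtendsMultiplication T ψ) {n m : ℕ} (hnm : n ≤ m)
    {q p : MvPolynomial σ 𝕜} (hq : q.IsHomogeneous n) (hp : p.IsHomogeneous m) :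
    inner 𝕜 (κ q) (ψ p) * inner 𝕜 (κ 1) (κ 1) =
      inner 𝕜 (κ 1) (ψ 1) * inner 𝕜 (κ q) (κ p) := by
  obtain ⟨A, hA⟩ := exists_continuousLinearMap_apply_eq_mul T p
  have hψp : ψ p = A (ψ 1) := by rw [hA ψ hTψ, mul_one]
  rw [hψp]
  refine hdense.induction_on (p := fun u => inner 𝕜 (κ q) (A u) * inner 𝕜 (κ 1) (κ 1) =
    inner 𝕜 (κ 1) u * inner 𝕜 (κ q) (κ p)) (ψ 1) (isClosed_eq (by fun_prop) (by fun_prop))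
    fun r => ?_
  have hone : (1 : MvPolynomial σ 𝕜).IsHomogeneous 0 := isHomogeneous_one σ 𝕜
  have hr : inner 𝕜 (κ 1) (κ r) = coeff 0 r * inner 𝕜 (κ 1) (κ 1) := by
    simpa only [one_mul] using hκ.inner_map_mul_right le_rfl hone hone r
  rw [hA κ hTκ, hκ.inner_map_mul_right hnm hq hp, hr]
  ring

lemma inner_one_map_one_ne_zero (hκ : GradedOrthogonal κ) (hdense : DenseRange κ)
    (hTκ : ExtendsMultiplication T κ) (hTψ : ExtendsMultiplication T ψ) (hψ : DenseRange ψ)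
    (hone : κ 1 ≠ 0) : inner 𝕜 (κ 1) (ψ 1) ≠ 0 := by
  intro hzero
  have horth_homogeneous : ∀ m p, p.IsHomogeneous m → inner 𝕜 (κ 1) (ψ p) = 0 := by
    intro m p hp
    have h := hκ.inner_mul_inner_one hdense hTκ hTψ m.zero_le (isHomogeneous_one σ 𝕜) hp
    rw [hzero, zero_mul] at h
    exact (mul_eq_zero.mp h).resolve_right (inner_self_ne_zero.mpr hone)
  refine hone (hψ.eq_zero_of_inner_left 𝕜 fun p => ?_)
  rw [← sum_homogeneousComponent p, map_sum, inner_sum]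
  exact Finset.sum_eq_zero fun i _ =>
    horth_homogeneous i _ (homogeneousComponent_isHomogeneous i p)

lemma exists_ne_zero_inner_eq_mul (hκ : GradedOrthogonal κ) (hdense : DenseRange κ)
    (hTκ : ExtendsMultiplication T κ) (hTψ : ExtendsMultiplication T ψ) (hψ : DenseRange ψ) :
    ∃ c : 𝕜, c ≠ 0 ∧ ∀ n m q p, n ≤ m → q.IsHomogeneous n → p.IsHomogeneous m →
      inner 𝕜 (κ q) (ψ p) = c * inner 𝕜 (κ q) (κ p) := by
  by_cases hone : κ 1 = 0
  · have hκ_zero : ∀ q, κ q = 0 := fun q => by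
      obtain ⟨A, hA⟩ := exists_continuousLinearMap_apply_eq_mul T q
      rw [← mul_one q, ← hA κ hTκ, hone, map_zero]
    exact ⟨1, one_ne_zero, fun n m q p _ _ _ => by simp [hκ_zero]⟩
  · have hinner_one : inner 𝕜 (κ 1) (κ 1) ≠ 0 := inner_self_ne_zero.mpr hone
    refine ⟨inner 𝕜 (κ 1) (ψ 1) / inner 𝕜 (κ 1) (κ 1),
      div_ne_zero (hκ.inner_one_map_one_ne_zero hdense hTκ hTψ hψ hone) hinner_one,
      fun n m q p hnm hq hp => ?_⟩
    rw [div_mul_eq_mul_div, eq_div_iff hinner_one]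
    exact hκ.inner_mul_inner_one hdense hTκ hTψ hnm hq hp

lemma exists_norm_le_mul_norm_of_isHomogeneous (hκ : GradedOrthogonal κ) (hdense : DenseRange κ)
    (hTκ : ExtendsMultiplication T κ) (hTψ : ExtendsMultiplication T ψ) (hψ : DenseRange ψ) :
    ∃ C : ℝ, 0 < C ∧ ∀ n p, p.IsHomogeneous n → ‖κ p‖ ≤ C * ‖ψ p‖ := by
  obtain ⟨c, hc, hinner⟩ := hκ.exists_ne_zero_inner_eq_mul hdense hTκ hTψ hψ
  have hc_pos : 0 < ‖c‖ := norm_pos_iff.mpr hc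
  refine ⟨‖c‖⁻¹, inv_pos.mpr hc_pos, fun n p hp => ?_⟩
  rw [le_inv_mul_iff₀ hc_pos]
  rcases (norm_nonneg (κ p)).eq_or_lt with hzero | hpos
  · simp [← hzero]
  refine le_of_mul_le_mul_left ?_ hpos
  calc ‖κ p‖ * (‖c‖ * ‖κ p‖) = ‖c * inner 𝕜 (κ p) (κ p)‖ := by
        rw [norm_mul, ← inner_self_re_eq_norm, inner_self_eq_norm_sq]; ring
    _ = ‖inner 𝕜 (κ p) (ψ p)‖ := by rw [hinner n n p p le_rfl hp hp]
    _ ≤ ‖κ p‖ * ‖ψ p‖ := norm_inner_le_norm _ _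

lemma exists_norm_le_mul_norm_of_intertwines {ι : MvPolynomial σ 𝕜 →ₗ[𝕜] H} {S : σ → H →L[𝕜] H}
    (hι : GradedOrthogonal ι) (hκ : GradedOrthogonal κ) (hι_dense : DenseRange ι)
    (hκ_dense : DenseRange κ) (hS : ExtendsMultiplication S ι) (hT : ExtendsMultiplication T κ)
    {L : H →L[𝕜] K} (hL_dense : DenseRange L) (hL : ∀ j v, L (S j v) = T j (L v)) :
    ∃ C : ℝ, 0 < C ∧ ∀ p, ‖κ p‖ ≤ C * ‖ι p‖ := by
  have hLι : ExtendsMultiplication T (L.toLinearMap ∘ₗ ι) := hS.comp_of_intertwines hL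
  obtain ⟨C, hC, hhom⟩ := hκ.exists_norm_le_mul_norm_of_isHomogeneous hκ_dense hT hLι
    (hL_dense.comp hι_dense L.continuous)
  obtain ⟨B, hB, hbound⟩ := L.bound
  refine ⟨C * B, by positivity, hι.norm_le_mul_norm_of_isHomogeneous hκ (by positivity) ?_⟩
  intro n p hp
  calc ‖κ p‖ ≤ C * ‖L (ι p)‖ := hhom n p hp
    _ ≤ C * (B * ‖ι p‖) := by gcongr; exact hbound _
    _ = C * B * ‖ι p‖ := (mul_assoc _ _ _).symm

end GradedOrthogonal

theorem similarity_iff_norm_comparable_general [CompleteSpace H] [CompleteSpace K]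
    {ι : MvPolynomial σ 𝕜 →ₗ[𝕜] H} {κ : MvPolynomial σ 𝕜 →ₗ[𝕜] K}
    (hι_dense : DenseRange ι) (hκ_dense : DenseRange κ)
    (hι : GradedOrthogonal ι) (hκ : GradedOrthogonal κ)
    {S : σ → H →L[𝕜] H} {T : σ → K →L[𝕜] K}
    (hS : ExtendsMultiplication S ι) (hT : ExtendsMultiplication T κ) :
    (∃ L : H ≃L[𝕜] K, ∀ (j : σ) (v : H), L (S j v) = T j (L v)) ↔
      (∃ α β : ℝ, 0 < α ∧ 0 < β ∧ ∀ p : MvPolynomial σ 𝕜,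
        α * ‖ι p‖ ≤ ‖κ p‖ ∧ ‖κ p‖ ≤ β * ‖ι p‖) := by
  constructor
  · rintro ⟨L, hL⟩
    have hL_symm : ∀ j v, L.symm (T j v) = S j (L.symm v) := fun j v => by
      rw [L.symm_apply_eq, hL, L.apply_symm_apply]
    obtain ⟨β, hβ, hκ_le⟩ := hι.exists_norm_le_mul_norm_of_intertwines hκ hι_dense hκ_dense hS hT
      (L := L.toContinuousLinearMap) L.surjective.denseRange hL
    obtain ⟨γ, hγ, hι_le⟩ := hκ.exists_norm_le_mul_norm_of_intertwines hι hκ_dense hι_dense hT hS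
      (L := L.symm.toContinuousLinearMap) L.symm.surjective.denseRange hL_symm
    exact ⟨γ⁻¹, β, inv_pos.mpr hγ, hβ, fun p => ⟨(inv_mul_le_iff₀ hγ).mpr (hι_le p), hκ_le p⟩⟩
  · rintro ⟨α, β, hα, -, hcomparable⟩
    have hκ_le : ∃ C, ∀ p, ‖κ p‖ ≤ C * ‖ι p‖ := ⟨β, fun p => (hcomparable p).2⟩
    have hι_le : ∃ C, ∀ p, ‖ι p‖ ≤ C * ‖κ p‖ :=
      ⟨α⁻¹, fun p => (le_inv_mul_iff₀ hα).mpr (hcomparable p).1⟩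
    let L := (LinearEquiv.refl 𝕜 (MvPolynomial σ 𝕜)).extend ι κ hι_dense hκ_le hκ_dense hι_le
    have hL : ∀ p, L (ι p) = κ p :=
      (LinearEquiv.refl 𝕜 _).extend_eq ι κ hι_dense hκ_le hκ_dense hι_le
    exact ⟨L, hS.intertwines_of_denseRange hT hι_dense (L := L.toContinuousLinearMap) hL⟩

end GradedOrthogonal

/-- Theorem 5.2, equivalence (i) ⇔ (ii): let `H₁`, `H₂` be Hilbert space
completions of the polynomial algebra `ℂ[z_1,…,z_d]` (with dense embeddings
`ι₁, ι₂`, homogeneous polynomials of different degrees being orthogonal) on which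
the coordinate multiplications extend to bounded operators `M₁ j`, `M₂ j`.  Then
the multiplication tuples are similar (via a bounded invertible intertwiner) iff
there are constants `α, β > 0` with `α‖p‖₁ ≤ ‖p‖₂ ≤ β‖p‖₁` for all polynomials. -/
theorem similarity_iff_norm_comparable (d : ℕ) (hd : 0 < d)
    {H₁ H₂ : Type*}
    [NormedAddCommGroup H₁] [InnerProductSpace ℂ H₁] [CompleteSpace H₁]
    [NormedAddCommGroup H₂] [InnerProductSpace ℂ H₂] [CompleteSpace H₂]
    (ι₁ : MvPolynomial (Fin d) ℂ →ₗ[ℂ] H₁) (ι₂ : MvPolynomial (Fin d) ℂ →ₗ[ℂ] H₂)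
    (hinj₁ : Function.Injective ι₁) (hinj₂ : Function.Injective ι₂)
    (hdense₁ : DenseRange ι₁) (hdense₂ : DenseRange ι₂)
    (horth₁ : ∀ (m n : ℕ) (p q : MvPolynomial (Fin d) ℂ),
      p.IsHomogeneous m → q.IsHomogeneous n → m ≠ n → ⟪ι₁ p, ι₁ q⟫ = 0)
    (horth₂ : ∀ (m n : ℕ) (p q : MvPolynomial (Fin d) ℂ),
      p.IsHomogeneous m → q.IsHomogeneous n → m ≠ n → ⟪ι₂ p, ι₂ q⟫ = 0)
    (M₁ : Fin d → H₁ →L[ℂ] H₁) (M₂ : Fin d → H₂ →L[ℂ] H₂)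
    (hM₁ : ∀ (j : Fin d) (p : MvPolynomial (Fin d) ℂ),
      M₁ j (ι₁ p) = ι₁ (MvPolynomial.X j * p))
    (hM₂ : ∀ (j : Fin d) (p : MvPolynomial (Fin d) ℂ),
      M₂ j (ι₂ p) = ι₂ (MvPolynomial.X j * p)) :
    (∃ X : H₁ ≃L[ℂ] H₂, ∀ (j : Fin d) (v : H₁), X (M₁ j v) = M₂ j (X v)) ↔
      (∃ α β : ℝ, 0 < α ∧ 0 < β ∧ ∀ p : MvPolynomial (Fin d) ℂ,
        α * ‖ι₁ p‖ ≤ ‖ι₂ p‖ ∧ ‖ι₂ p‖ ≤ β * ‖ι₁ p‖) :=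
  similarity_iff_norm_comparable_general hdense₁ hdense₂ horth₁ horth₂ hM₁ hM₂
end

section
/- With the notation of the context, suppose X : H_1 → H_2 is a bounded invertible linear operator satisfying X M_j^{(1)} = M_j^{(2)} X for all j = 1,…,d. Then X is lower triangular with respect to the degree gradings: for all homogeneous polynomials p and q with deg q < deg p one has ⟨X p, q⟩_2 = 0; moreover ⟨X 1, 1⟩_2 ≠ 0. (This combines the claims X_{0,0} ≠ 0 and X_{0,s} = 0 for s > 0 established in the proof of Theorem 5.2 with the Remark following it, which asserts X_{r,s} = 0 for all s > r.) -/
open scoped ComplexInnerProductSpace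

/-!
Let `I` be the ideal of `ℂ[z₁, …, z_d]` generated by the variables. Since `M_j` maps the closure of
`ι₂ (I ^ n)` into the closure of `ι₂ (I ^ (n + 1))`, and `ι₂` has dense range, the intertwining
relation forces `X (ι₁ (I ^ n))` into the closure of `ι₂ (I ^ n)`. That closure is orthogonal to all
homogeneous polynomials of degree less than `n`, which is triangularity. In particular `X (ι₁ I)` is
orthogonal to `ι₂ 1`, so if `X (ι₁ 1)` were orthogonal to `ι₂ 1` as well, then so would be the
dense range of `X ∘ ι₁`.
-/

section ClosedImage

variable {R A E σ : Type*} [CommSemiring R] [CommSemiring A] [Algebra R A]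
  [AddCommMonoid E] [Module R E] [TopologicalSpace E]

/-- A linear map `f : A → E` intertwines multiplication by the elements `s j` of the algebra `A`
with the operators `M j` on `E`. This covers both an operator extending multiplication along an
embedding `f = ι` and a map `f = X ∘ ι` commuting with multiplication. -/
def IntertwinesMul (s : σ → A) (M : σ → E →L[R] E) (f : A →ₗ[R] E) : Prop :=
  ∀ j a, M j (f a) = f (s j * a)

variable [ContinuousAdd E] [ContinuousConstSMul R E]

/-- The closure of the image of an ideal `J` of an algebra under a linear map `ι`. For polynomials
and `J = idealOfVars σ R ^ n` it is the closed span of the homogeneous polynomials of degree at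
least `n`. -/
def closedImage (ι : A →ₗ[R] E) (J : Ideal A) : Submodule R E :=
  ((J.restrictScalars R).map ι).topologicalClosure

theorem closedImage_top {ι : A →ₗ[R] E} (hι : DenseRange ι) : closedImage ι ⊤ = ⊤ := by
  rw [closedImage, Submodule.restrictScalars_top, Submodule.map_top]
  exact Submodule.dense_iff_topologicalClosure_eq_top.1 hι

theorem apply_mem_closedImage_mul {ι : A →ₗ[R] E} {T : E →L[R] E} {I J : Ideal A} {a : A}
    (hT : ∀ b, T (ι b) = ι (a * b)) (ha : a ∈ I) {x : E} (hx : x ∈ closedImage ι J) :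
    T x ∈ closedImage ι (I * J) := by
  refine map_mem_closure T.continuous hx ?_
  rintro _ ⟨b, hb, rfl⟩
  exact ⟨a * b, Ideal.mul_mem_mul ha hb, (hT b).symm⟩

theorem IntertwinesMul.apply_mem_closedImage_span_pow {s : σ → A} {M : σ → E →L[R] E}
    {ι L : A →ₗ[R] E} (hι : IntertwinesMul s M ι) (hL : IntertwinesMul s M L)
    (hdense : DenseRange ι) (n : ℕ) {a : A} (ha : a ∈ Ideal.span (Set.range s) ^ n) :
    L a ∈ closedImage ι (Ideal.span (Set.range s) ^ n) := by
  induction n generalizing a with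
  | zero => simp [Ideal.one_eq_top, closedImage_top hdense]
  | succ n ih =>
    rw [pow_succ'] at ha ⊢
    have generator_mul (j : σ) {b : A} (hb : b ∈ Ideal.span (Set.range s) ^ n) :
        L (s j * b) ∈ closedImage ι (Ideal.span (Set.range s) * Ideal.span (Set.range s) ^ n) := by
      rw [← hL]
      exact apply_mem_closedImage_mul (hι j) (Ideal.subset_span (Set.mem_range_self j)) (ih hb)
    induction ha using Submodule.mul_induction_on' with
    | add x _ y _ hx hy => rw [map_add]; exact add_mem hx hy
    | mem_mul_mem c hc b hb =>
      induction hc using Submodule.span_induction generalizing b with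
      | mem c hc => obtain ⟨j, rfl⟩ := hc; exact generator_mul j hb
      | zero => simp
      | add c d _ _ hc hd => rw [add_mul, map_add]; exact add_mem (hc b hb) (hd b hb)
      | smul a c _ hc =>
        rw [smul_eq_mul, mul_assoc, mul_left_comm]
        exact hc (a * b) (Ideal.mul_mem_left _ a hb)

end ClosedImage

section IdealOfVars

open MvPolynomial

variable {σ R : Type*}

theorem mem_pow_idealOfVars_of_isHomogeneous [CommSemiring R] {p : MvPolynomial σ R} {n : ℕ}
    (hp : p.IsHomogeneous n) : p ∈ idealOfVars σ R ^ n :=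
  (mem_pow_idealOfVars_iff' n p).2 fun _ hx => hp.coeff_eq_zero hx.ne

theorem sub_C_constantCoeff_mem_idealOfVars [CommRing R] (p : MvPolynomial σ R) :
    p - C (constantCoeff p) ∈ idealOfVars σ R := by
  rw [← pow_one (idealOfVars σ R), mem_pow_idealOfVars_iff']
  intro x hx
  obtain rfl : x = 0 := (Finsupp.degree_eq_zero_iff x).1 (Nat.lt_one_iff.1 hx)
  simp [constantCoeff_eq]

end IdealOfVars

section DegreeOrthogonal

open MvPolynomial
open scoped InnerProductSpace

variable {𝕜 H σ : Type*} [RCLike 𝕜] [NormedAddCommGroup H] [InnerProductSpace 𝕜 H]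

/-- The images under `ι` of homogeneous polynomials of different degrees are orthogonal, i.e. the
inner product which `ι` induces on polynomials is compatible with the grading by total degree. -/
def DegreeOrthogonal (ι : MvPolynomial σ 𝕜 →ₗ[𝕜] H) : Prop :=
  ∀ (m n : ℕ) (p q : MvPolynomial σ 𝕜),
    p.IsHomogeneous m → q.IsHomogeneous n → m ≠ n → ⟪ι p, ι q⟫_𝕜 = 0

variable {ι L : MvPolynomial σ 𝕜 →ₗ[𝕜] H} {M : σ → H →L[𝕜] H} {m n : ℕ} {p q : MvPolynomial σ 𝕜}

theorem DegreeOrthogonal.inner_eq_zero_of_mem_pow_idealOfVars (horth : DegreeOrthogonal ι)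
    (hp : p ∈ idealOfVars σ 𝕜 ^ m) (hq : q.IsHomogeneous n) (hnm : n < m) :
    ⟪ι p, ι q⟫_𝕜 = 0 := by
  rw [p.as_sum, map_sum, sum_inner]
  refine Finset.sum_eq_zero fun x hx => ?_
  have hmx : m ≤ x.degree := (mem_pow_idealOfVars_iff m p).1 hp x hx
  exact horth x.degree n _ q (isHomogeneous_monomial _ rfl) hq (hnm.trans_le hmx).ne'

theorem DegreeOrthogonal.inner_eq_zero_of_mem_closedImage (horth : DegreeOrthogonal ι) {x : H}
    (hx : x ∈ closedImage ι (idealOfVars σ 𝕜 ^ m)) (hq : q.IsHomogeneous n) (hnm : n < m) :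
    ⟪x, ι q⟫_𝕜 = 0 := by
  refine (Submodule.orthogonal_closure' _ (ι q)).1 ?_ x hx
  rintro _ ⟨p, hp, rfl⟩
  exact horth.inner_eq_zero_of_mem_pow_idealOfVars hp hq hnm

theorem IntertwinesMul.inner_eq_zero_of_mem_pow_idealOfVars (hL : IntertwinesMul X M L)
    (hι : IntertwinesMul X M ι) (hdense : DenseRange ι) (horth : DegreeOrthogonal ι)
    (hp : p ∈ idealOfVars σ 𝕜 ^ m) (hq : q.IsHomogeneous n) (hnm : n < m) :
    ⟪L p, ι q⟫_𝕜 = 0 :=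
  horth.inner_eq_zero_of_mem_closedImage (hι.apply_mem_closedImage_span_pow hL hdense m hp) hq hnm

theorem IntertwinesMul.inner_apply_one (hL : IntertwinesMul X M L)
    (hι : IntertwinesMul X M ι) (hdense : DenseRange ι) (horth : DegreeOrthogonal ι)
    (p : MvPolynomial σ 𝕜) :
    ⟪L p, ι 1⟫_𝕜 = star (constantCoeff p) * ⟪L 1, ι 1⟫_𝕜 := by
  have higher_degree : ⟪L (p - C (constantCoeff p)), ι 1⟫_𝕜 = 0 :=
    hL.inner_eq_zero_of_mem_pow_idealOfVars hι hdense horth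
      ((pow_one (idealOfVars σ 𝕜)).symm ▸ sub_C_constantCoeff_mem_idealOfVars p)
      (isHomogeneous_one σ 𝕜) one_pos
  rw [map_sub, inner_sub_left, sub_eq_zero] at higher_degree
  rw [higher_degree, ← mul_one (C _), C_mul', map_smul, inner_smul_left, starRingEnd_apply]

-- `L` plays the role of `X ∘ ι₁`: the space `H₁` enters only through this map.
theorem intertwiner_lower_triangular_general (hdense : DenseRange ι) (horth : DegreeOrthogonal ι)
    (hone : ι 1 ≠ 0) (hι : IntertwinesMul X M ι) (hL : IntertwinesMul X M L)
    (hLdense : DenseRange L) :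
    (∀ (m n : ℕ) (p q : MvPolynomial σ 𝕜),
      p.IsHomogeneous m → q.IsHomogeneous n → n < m → ⟪L p, ι q⟫_𝕜 = 0) ∧
      ⟪L 1, ι 1⟫_𝕜 ≠ 0 := by
  refine ⟨fun m n p q hp hq hnm => hL.inner_eq_zero_of_mem_pow_idealOfVars hι hdense horth
    (mem_pow_idealOfVars_of_isHomogeneous hp) hq hnm, fun hzero => hone ?_⟩
  refine hLdense.eq_zero_of_inner_right 𝕜 fun p => ?_
  rw [hL.inner_apply_one hι hdense horth, hzero, mul_zero]

end DegreeOrthogonal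

/-- The triangularity claims from the proof of Theorem 5.2 and the Remark
following it: if `X` is a bounded invertible operator intertwining the two
multiplication tuples, then `X` is lower triangular with respect to the degree
gradings, i.e. `⟪X(ι₁ p), ι₂ q⟫ = 0` whenever `p, q` are homogeneous with
`deg q < deg p`; moreover `⟪X(ι₁ 1), ι₂ 1⟫ ≠ 0`. -/
theorem intertwiner_lower_triangular (d : ℕ) (hd : 0 < d)
    {H₁ H₂ : Type*}
    [NormedAddCommGroup H₁] [InnerProductSpace ℂ H₁] [CompleteSpace H₁]
    [NormedAddCommGroup H₂] [InnerProductSpace ℂ H₂] [CompleteSpace H₂]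
    (ι₁ : MvPolynomial (Fin d) ℂ →ₗ[ℂ] H₁) (ι₂ : MvPolynomial (Fin d) ℂ →ₗ[ℂ] H₂)
    (hinj₁ : Function.Injective ι₁) (hinj₂ : Function.Injective ι₂)
    (hdense₁ : DenseRange ι₁) (hdense₂ : DenseRange ι₂)
    (horth₁ : ∀ (m n : ℕ) (p q : MvPolynomial (Fin d) ℂ),
      p.IsHomogeneous m → q.IsHomogeneous n → m ≠ n → ⟪ι₁ p, ι₁ q⟫ = 0)
    (horth₂ : ∀ (m n : ℕ) (p q : MvPolynomial (Fin d) ℂ),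
      p.IsHomogeneous m → q.IsHomogeneous n → m ≠ n → ⟪ι₂ p, ι₂ q⟫ = 0)
    (M₁ : Fin d → H₁ →L[ℂ] H₁) (M₂ : Fin d → H₂ →L[ℂ] H₂)
    (hM₁ : ∀ (j : Fin d) (p : MvPolynomial (Fin d) ℂ),
      M₁ j (ι₁ p) = ι₁ (MvPolynomial.X j * p))
    (hM₂ : ∀ (j : Fin d) (p : MvPolynomial (Fin d) ℂ),
      M₂ j (ι₂ p) = ι₂ (MvPolynomial.X j * p))
    (X : H₁ ≃L[ℂ] H₂)
    (hX : ∀ (j : Fin d) (v : H₁), X (M₁ j v) = M₂ j (X v)) :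
    (∀ (m n : ℕ) (p q : MvPolynomial (Fin d) ℂ),
      p.IsHomogeneous m → q.IsHomogeneous n → n < m → ⟪X (ι₁ p), ι₂ q⟫ = 0) ∧
      ⟪X (ι₁ 1), ι₂ 1⟫ ≠ 0 :=
  intertwiner_lower_triangular_general (L := X.toLinearMap ∘ₗ ι₁) hdense₂ horth₂
    ((map_ne_zero_iff ι₂ hinj₂).2 one_ne_zero) hM₂
    (fun j p => by simp [← hX, hM₁]) (X.surjective.denseRange.comp hdense₁ X.continuous)
end
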